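/- Let λ : ℤ₊ → ℝ satisfy (UB) and let N ≥ 1. For all t ≥ 0, x ∈ W^{N+1} and y' ∈ W^N: Σ_{z ∈ W^{N+1}} det( e^{tL}(x_i, z_j) )_{i,j=1}^{N+1} · ∏_{i=1}^N λ(y'_i)^{−1} · 1(y' ≺ z) = Σ_{y ∈ W^N : y ≺ x} ∏_{i=1}^N λ(y_i)^{−1} · det( e^{tL}(y_i, y'_j) )_{i,j=1}^N, the series on the left converging absolutely. (Equivalently, the Karlin–McGregor semigroups on W^{N+1} and W^N are intertwined: P_t^{N+1} Λ_N^{N+1} = Λ_N^{N+1} P_t^N.) -/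

import Mathlib

open Complex MeasureTheory Finset
open scoped Real ComplexOrder

/-- ψ_x(w) = ∏_{k=0}^{x} λ(k)/(λ(k)−w). -/
noncomputable def psiF (lam : ℕ → ℝ) (x : ℕ) (w : ℂ) : ℂ :=
  ∏ k ∈ Finset.range (x + 1), (lam k : ℂ) / ((lam k : ℂ) - w)

/-- p_x(w) = ∏_{k=0}^{x−1} (λ(k)−w)/λ(k). -/
noncomputable def pF (lam : ℕ → ℝ) (x : ℕ) (w : ℂ) : ℂ :=
  ∏ k ∈ Finset.range x, (((lam k : ℂ) - w) / (lam k : ℂ))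

/-- e^{tL}(x,y) := −(1/λ(y))·(1/(2πi)) ∮_{|w|=R} ψ_y(w) p_x(w) e^{−tw} dw,
the contour being the counterclockwise circle of radius R centred at 0. -/
noncomputable def eL (lam : ℕ → ℝ) (R t : ℝ) (x y : ℕ) : ℂ :=
  -(1 / (lam y : ℂ)) * ((2 * (Real.pi : ℂ) * Complex.I)⁻¹ *
    ∮ w in C(0, R), psiF lam y w * pF lam x w * Complex.exp (-(t : ℂ) * w))

/-- y ≺ x : interlacing, x_1 ≤ y_1 < x_2 ≤ y_2 < ⋯ ≤ y_N < x_{N+1}.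
(Membership of (y,x) in W^{N,N+1} is exactly this condition.) -/
def Interlace {N : ℕ} (y : Fin N → ℕ) (x : Fin (N + 1) → ℕ) : Prop :=
  ∀ i : Fin N, x i.castSucc ≤ y i ∧ y i < x i.succ

instance {N : ℕ} (y : Fin N → ℕ) (x : Fin (N + 1) → ℕ) : Decidable (Interlace y x) :=
  inferInstanceAs (Decidable (∀ i : Fin N, x i.castSucc ≤ y i ∧ y i < x i.succ))

/-!
The mass `T x n` that `e^{tL}(x, ·)` puts on `{n, n + 1, …}` is a contour integral as well. It
starts at `T x 0 = 1` (residue at `0`), and it decays geometrically in `n` because the contour can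
be enlarged until each factor `λ(k) / (λ(k) - w)` has norm at most `1/2`. The relation
`p_{v+1} - p_v = -(w / λ(v)) p_v` yields `T (v+1) (y+1) - T v (y+1) = (λ(y) / λ(v)) e^{tL}(v, y)`:
up to the factors `λ`, the transpose of `e^{tL}` is its Siegmund dual.

An intertwining holds for every kernel with unit row sums, with its Siegmund dual on the right. For
fixed `y'`, the condition `y' ≺ z` confines each `z_j` to a block of its own, so by multilinearity
the series is the determinant of the block sums. Column operations turn these into cumulative sums,
the last column being constant `1`, and subtracting consecutive rows leaves an `N × N` determinant
whose entries are sums of the dual kernel over `[x_i, x_{i+1})`. Multilinearity in the rows expands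
it into the sum over `y ≺ x`.
-/

section Determinant

variable {A : Type*} [CommRing A]

lemma det_of_sum_rows {n ι : Type*} [Fintype n] [DecidableEq n] (s : n → Finset ι)
    (g : ι → n → A) :
    (Matrix.of fun i j => ∑ v ∈ s i, g v j).det =
      ∑ y ∈ Fintype.piFinset s, (Matrix.of fun i j => g (y i) j).det := by
  have h := (Matrix.detRowAlternating (n := n) (R := A)).toMultilinearMap.map_sum_finset
    (fun _ v => g v) s
  refine (congrArg Matrix.det ?_).trans h
  ext i j
  simp

lemma det_eq_det_sub_of_last_col_eq_one {n : ℕ} (G : Matrix (Fin (n + 1)) (Fin (n + 1)) A)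
    (hG : ∀ i, G i (Fin.last n) = 1) :
    G.det = (Matrix.of fun i j : Fin n => G i.castSucc j.castSucc - G i.succ j.castSucc).det := by
  let B : Matrix (Fin (n + 1)) (Fin (n + 1)) A :=
    .of fun i j => Fin.cases (motive := fun _ => A) (G 0 j) (fun i => G i.succ j - G i.castSucc j) i
  have hrows : G.det = B.det :=
    Matrix.det_eq_of_forall_row_eq_smul_add_pred (fun _ => 1) (fun j => rfl)
      fun i j => by simp [B]
  have hminor : B.submatrix (Fin.succAbove 0) (Fin.last n).succAbove =
      -Matrix.of fun i j : Fin n => G i.castSucc j.castSucc - G i.succ j.castSucc := by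
    ext i j
    simp [B]
  rw [hrows, Matrix.det_succ_column B (Fin.last n), Fin.sum_univ_succ,
    sum_eq_zero fun i _ => by simp [B, hG], hminor, Matrix.det_neg]
  simp [B, hG, ← mul_assoc, ← mul_pow]

end Determinant

section Series

variable {A : Type*} [NormedCommRing A] {n : ℕ} {ι : Fin n → Type*}

lemma summable_norm_prod_pi (f : ∀ j, ι j → A) (hf : ∀ j, Summable fun m => ‖f j m‖) :
    Summable fun z : ∀ j, ι j => ‖∏ j, f j (z j)‖ := by
  induction n with
  | zero => exact .of_finite
  | succ n ih =>
    rw [← (Fin.consEquiv ι).summable_iff]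
    exact ((hf 0).mul_norm (ih (fun j => f j.succ) fun j => hf j.succ)).congr fun z => by
      simp [Fin.prod_univ_succ]

lemma hasSum_prod_pi [CompleteSpace A] (f : ∀ j, ι j → A) (hf : ∀ j, Summable fun m => ‖f j m‖) :
    HasSum (fun z : ∀ j, ι j => ∏ j, f j (z j)) (∏ j, ∑' m, f j m) := by
  induction n with
  | zero => simp
  | succ n ih =>
    have hmul := summable_mul_of_summable_norm (hf 0)
      (summable_norm_prod_pi (fun j => f j.succ) fun j => hf j.succ)
    rw [← (Fin.consEquiv ι).hasSum_iff, Fin.prod_univ_succ]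
    simpa [Function.comp_def, Fin.prod_univ_succ] using
      (hf 0).of_norm.hasSum.mul (ih (fun j => f j.succ) fun j => hf j.succ) hmul

lemma hasSum_det_pi [CompleteSpace A] (f : Fin n → ∀ j, ι j → A)
    (hf : ∀ i j, Summable fun m => ‖f i j m‖) :
    HasSum (fun z : ∀ j, ι j => (Matrix.of fun i j => f i j (z j)).det)
      (Matrix.of fun i j => ∑' m, f i j m).det := by
  simp only [Matrix.det_apply, Matrix.of_apply]
  exact hasSum_sum fun σ _ =>
    (hasSum_prod_pi (fun j => f (σ j) j) fun j => hf (σ j) j).const_smul _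

end Series

section Interlacing

variable {N : ℕ}

lemma Interlace.strictMono {y : Fin N → ℕ} {x : Fin (N + 1) → ℕ} (h : Interlace y x) :
    StrictMono x :=
  Fin.strictMono_iff_lt_succ.mpr fun i => (h i).1.trans_lt (h i).2

lemma hasSum_mul_ite_interlace {A : Type*} [NonAssocSemiring A] [TopologicalSpace A]
    {y : Fin N → ℕ} {f : (Fin (N + 1) → ℕ) → A} {a : A}
    (h : HasSum (fun z : {z : Fin (N + 1) → ℕ // Interlace y z} => f z.1) a) :
    HasSum (fun z : {z : Fin (N + 1) → ℕ // StrictMono z} =>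
      f z.1 * if Interlace y z.1 then 1 else 0) a := by
  let incl := Subtype.impEmbedding (Interlace y) StrictMono fun _ => Interlace.strictMono
  have hvanish (z : {z : Fin (N + 1) → ℕ // StrictMono z}) (hz : z ∉ Set.range incl) :
      f z.1 * (if Interlace y z.1 then 1 else 0) = 0 := by
    have hnot : ¬ Interlace y z.1 := fun hz' => hz ⟨⟨z.1, hz'⟩, rfl⟩
    rw [if_neg hnot, mul_zero]
  refine (incl.injective.hasSum_iff hvanish).mp ?_
  convert h using 2 with z
  exact (congrArg (f z.1 * ·) (if_pos z.2)).trans (mul_one _)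

lemma mem_piFinset_Ico_iff_interlace {y : Fin N → ℕ} {x : Fin (N + 1) → ℕ} :
    y ∈ Fintype.piFinset (fun i : Fin N => Ico (x i.castSucc) (x i.succ)) ↔ Interlace y x := by
  simp [Interlace]

lemma det_sum_Ico_eq_tsum_interlace {A : Type*} [CommRing A] [TopologicalSpace A]
    (x : Fin (N + 1) → ℕ) (g : ℕ → Fin N → A) :
    (Matrix.of fun i j => ∑ v ∈ Ico (x i.castSucc) (x i.succ), g v j).det =
      ∑' y : {y : Fin N → ℕ // Interlace y x}, (Matrix.of fun i j => g (y.1 i) j).det := by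
  rw [det_of_sum_rows (fun i : Fin N => Ico (x i.castSucc) (x i.succ)), ← Finset.tsum_subtype]
  exact (Equiv.subtypeEquivRight fun _ => mem_piFinset_Ico_iff_interlace).tsum_eq
    fun y : {y : Fin N → ℕ // Interlace y x} => (Matrix.of fun i j => g (y.1 i) j).det

/-- The integers up to `y j`, or all of `ℕ` at the last index, where `y` has no entry; the
quantifier over `k` merges the two cases. -/
def initialSegment (y : Fin N → ℕ) (j : Fin (N + 1)) : Set ℕ :=
  {m | ∀ k : Fin N, k.castSucc = j → m ≤ y k}

/-- The block `(y_{j-1}, y_j]` of values that `y ≺ z` allows for the coordinate `z j`, unbounded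
below at `j = 0` and above at `j = N`. -/
def interlaceBlock (y : Fin N → ℕ) (j : Fin (N + 1)) : Set ℕ :=
  {m ∈ initialSegment y j | ∀ k : Fin N, k.succ = j → y k < m}

lemma initialSegment_castSucc (y : Fin N → ℕ) (j : Fin N) :
    initialSegment y j.castSucc = Set.Iic (y j) := by
  ext m
  simp [initialSegment]

lemma initialSegment_last (y : Fin N → ℕ) : initialSegment y (Fin.last N) = Set.univ := by
  simp [initialSegment, Fin.castSucc_ne_last]

lemma interlaceBlock_zero (y : Fin N → ℕ) : interlaceBlock y 0 = initialSegment y 0 := by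
  simp [interlaceBlock]

lemma interlaceBlock_succ (y : Fin N → ℕ) (j : Fin N) :
    interlaceBlock y j.succ = initialSegment y j.succ \ initialSegment y j.castSucc := by
  ext m
  simp [interlaceBlock, initialSegment_castSucc]

lemma initialSegment_castSucc_subset_succ {y : Fin N → ℕ} (hy : Monotone y) (j : Fin N) :
    initialSegment y j.castSucc ⊆ initialSegment y j.succ := by
  rw [initialSegment_castSucc]
  exact fun m hm k hk =>
    hm.trans (hy (Fin.castSucc_le_castSucc_iff.mp (hk ▸ Fin.castSucc_lt_succ.le)))

lemma interlace_iff_mem_pi_interlaceBlock {y : Fin N → ℕ} {z : Fin (N + 1) → ℕ} :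
    Interlace y z ↔ z ∈ Set.univ.pi (interlaceBlock y) := by
  constructor
  · exact fun h j _ => ⟨fun k hk => hk ▸ (h k).1, fun k hk => hk ▸ (h k).2⟩
  · exact fun h k => ⟨(h _ trivial).1 k rfl, (h _ trivial).2 k rfl⟩

/-- Tuples interlacing with `y` as independent choices of one value in each block. -/
def interlaceEquivPi (y : Fin N → ℕ) :
    {z : Fin (N + 1) → ℕ // Interlace y z} ≃ ∀ j, interlaceBlock y j :=
  (Equiv.subtypeEquivRight fun _ => interlace_iff_mem_pi_interlaceBlock).trans
    (Equiv.Set.univPi (interlaceBlock y))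

variable {A : Type*} [NormedCommRing A] [CompleteSpace A]

lemma det_tsum_interlaceBlock {y : Fin N → ℕ} (hy : Monotone y) {f : Fin (N + 1) → ℕ → A}
    (hf : ∀ i, Summable (f i)) :
    (Matrix.of fun i j => ∑' m : interlaceBlock y j, f i m).det =
      (Matrix.of fun i j => ∑' m : initialSegment y j, f i m).det := by
  symm
  refine Matrix.det_eq_of_forall_col_eq_smul_add_pred (fun _ => 1) (fun i => ?_) fun i j => ?_
  · rw [Matrix.of_apply, Matrix.of_apply, interlaceBlock_zero]
  · simp only [Matrix.of_apply, one_mul]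
    rw [interlaceBlock_succ, ← ((hf i).subtype _).tsum_union_disjoint Set.disjoint_sdiff_left
      ((hf i).subtype _), Set.sdiff_union_of_subset (initialSegment_castSucc_subset_succ hy j)]

end Interlacing

section SiegmundDual

/-- The Siegmund dual `d(v, y) = ∑_{m ≤ y} (e(v, m) - e(v + 1, m))` of a kernel `e` on `ℕ`, indexed
like `e`: as a transition kernel it leads from `y` to `v`. -/
def siegmundDual {A : Type*} [AddCommGroup A] (e : ℕ → ℕ → A) (v y : ℕ) : A :=
  ∑ m ∈ Iic y, e v m - ∑ m ∈ Iic y, e (v + 1) m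

lemma sum_Ico_siegmundDual {A : Type*} [AddCommGroup A] (e : ℕ → ℕ → A) {a b : ℕ} (hab : a ≤ b)
    (y : ℕ) :
    ∑ v ∈ Ico a b, siegmundDual e v y = ∑ m ∈ Iic y, e a m - ∑ m ∈ Iic y, e b m := by
  rw [← neg_sub, ← sum_Ico_sub (fun v => ∑ m ∈ Iic y, e v m) hab, ← sum_neg_distrib]
  simp only [siegmundDual, neg_sub]

variable {A : Type*} [NormedCommRing A] [CompleteSpace A] {N : ℕ}

lemma hasSum_det_interlace {e : ℕ → ℕ → A} (he : ∀ a, Summable fun m => ‖e a m‖)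
    (hone : ∀ a, ∑' m, e a m = 1) {x : Fin (N + 1) → ℕ} (hx : Monotone x) {y' : Fin N → ℕ}
    (hy' : Monotone y') :
    HasSum (fun z : {z : Fin (N + 1) → ℕ // Interlace y' z} =>
        (Matrix.of fun i j => e (x i) (z.1 j)).det)
      (∑' y : {y : Fin N → ℕ // Interlace y x},
        (Matrix.of fun i j => siegmundDual e (y.1 i) (y' j)).det) := by
  have hblocks := hasSum_det_pi (fun i j (m : interlaceBlock y' j) => e (x i) m)
    fun i j => (he (x i)).subtype _
  have hlast (i : Fin (N + 1)) : ∑' m : initialSegment y' (Fin.last N), e (x i) m = 1 := by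
    rw [initialSegment_last, tsum_univ, hone]
  have hcum (i : Fin (N + 1)) (j : Fin N) :
      ∑' m : initialSegment y' j.castSucc, e (x i) m = ∑ m ∈ Iic (y' j), e (x i) m := by
    rw [initialSegment_castSucc, ← Finset.coe_Iic, Finset.tsum_subtype']
  rw [← (interlaceEquivPi y').hasSum_iff,
    det_tsum_interlaceBlock hy' fun i => (he (x i)).of_norm,
    det_eq_det_sub_of_last_col_eq_one _ hlast] at hblocks
  simp only [Matrix.of_apply, hcum,
    ← sum_Ico_siegmundDual e (hx Fin.castSucc_lt_succ.le)] at hblocks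
  rwa [det_sum_Ico_eq_tsum_interlace x fun v j => siegmundDual e v (y' j)] at hblocks

end SiegmundDual

section Contour

variable {lam : ℕ → ℝ} {R : ℝ}

/-- The integrand `∏_{k < n} λ(k) / (λ(k) - w) · p_x(w) e^{-tw} / w` of `tailMass`: dividing by `w`
makes its differences in `n` and in `x` multiples of the integrand of `eL`. -/
noncomputable def tailIntegrand (lam : ℕ → ℝ) (t : ℝ) (x n : ℕ) (w : ℂ) : ℂ :=
  (∏ k ∈ range n, (lam k : ℂ) / ((lam k : ℂ) - w)) * (w⁻¹ * pF lam x w * exp (-(t : ℂ) * w))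

/-- The mass that `e^{tL}(x, ·)` puts on `{n, n + 1, …}`, as a contour integral. -/
noncomputable def tailMass (lam : ℕ → ℝ) (R t : ℝ) (x n : ℕ) : ℂ :=
  (2 * (π : ℂ) * I)⁻¹ * ∮ w in C(0, R), tailIntegrand lam t x n w

lemma differentiable_pF (lam : ℕ → ℝ) (x : ℕ) : Differentiable ℂ (pF lam x) := by
  unfold pF
  fun_prop

lemma pF_zero_right (hne : ∀ k, lam k ≠ 0) (x : ℕ) : pF lam x 0 = 1 :=
  prod_eq_one fun k _ => by simp [hne k]

lemma tailMass_zero (hR : 0 < R) (hne : ∀ k, lam k ≠ 0) (t : ℝ) (x : ℕ) :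
    tailMass lam R t x 0 = 1 := by
  have hd : Differentiable ℂ fun w : ℂ => pF lam x w * exp (-(t : ℂ) * w) :=
    (differentiable_pF lam x).mul (by fun_prop)
  have hcauchy := hd.differentiableOn.circleIntegral_sub_inv_smul (c := 0)
    (Metric.mem_ball_self hR)
  simp only [sub_zero, smul_eq_mul, mul_zero, exp_zero, mul_one, pF_zero_right hne,
    ← mul_assoc] at hcauchy
  simp only [tailMass, tailIntegrand, range_zero, prod_empty, one_mul, hcauchy]
  exact inv_mul_cancel₀ two_pi_I_ne_zero

lemma ofReal_sub_ne_zero_of_abs_lt_norm {a : ℝ} {w : ℂ} (h : |a| < ‖w‖) : (a : ℂ) - w ≠ 0 := by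
  rw [sub_ne_zero]
  rintro rfl
  simp at h

lemma norm_div_sub_le_half {a w : ℂ} (h : 3 * ‖a‖ ≤ ‖w‖) : ‖a / (a - w)‖ ≤ 1 / 2 := by
  rw [norm_div]
  refine div_le_of_le_mul₀ (norm_nonneg _) (by norm_num) ?_
  linarith [norm_sub_norm_le w a, norm_sub_rev w a]

section

variable (hR : ∀ k, |lam k| < R)
include hR

lemma radius_pos : 0 < R := (abs_nonneg _).trans_lt (hR 0)

lemma differentiableAt_tailIntegrand {w : ℂ} (hw : R ≤ ‖w‖) (t : ℝ) (x n : ℕ) :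
    DifferentiableAt ℂ (tailIntegrand lam t x n) w := by
  have hw0 : w ≠ 0 := norm_pos_iff.mp ((radius_pos hR).trans_le hw)
  have hprod : DifferentiableAt ℂ (fun w => ∏ k ∈ range n, (lam k : ℂ) / ((lam k : ℂ) - w)) w :=
    .fun_finsetProd fun k _ => (differentiableAt_const _).div (by fun_prop)
      (ofReal_sub_ne_zero_of_abs_lt_norm ((hR k).trans_le hw))
  have hp := differentiable_pF lam x
  exact hprod.mul (((differentiableAt_id.inv hw0).mul hp.differentiableAt).mul (by fun_prop))

lemma continuousOn_tailIntegrand (t : ℝ) (x n : ℕ) :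
    ContinuousOn (tailIntegrand lam t x n) {w | R ≤ ‖w‖} := fun _ hw =>
  (differentiableAt_tailIntegrand hR hw t x n).continuousAt.continuousWithinAt

lemma circleIntegrable_tailIntegrand (t : ℝ) (x n : ℕ) :
    CircleIntegrable (tailIntegrand lam t x n) 0 R :=
  ((continuousOn_tailIntegrand hR t x n).mono fun _ hw =>
    (mem_sphere_zero_iff_norm.mp hw).ge).circleIntegrable (radius_pos hR).le

lemma tailMass_sub_tailMass_eq_mul_eL {t : ℝ} {x x' n n' v y : ℕ} {c : ℂ}
    (h : ∀ w : ℂ, ‖w‖ = R → tailIntegrand lam t x n w - tailIntegrand lam t x' n' w =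
      c * -(1 / (lam y : ℂ)) * (psiF lam y w * pF lam v w * exp (-(t : ℂ) * w))) :
    tailMass lam R t x n - tailMass lam R t x' n' = c * eL lam R t v y := by
  rw [tailMass, tailMass, ← mul_sub, ← circleIntegral.integral_sub
    (circleIntegrable_tailIntegrand hR t x n) (circleIntegrable_tailIntegrand hR t x' n'),
    circleIntegral.integral_congr (radius_pos hR).le fun w hw =>
      h w (mem_sphere_zero_iff_norm.mp hw), circleIntegral.integral_const_mul, eL]
  ring

lemma tailMass_eq_of_radius_le {R' : ℝ} (hRR' : R ≤ R') (t : ℝ) (x n : ℕ) :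
    tailMass lam R t x n = tailMass lam R' t x n := by
  unfold tailMass
  rw [circleIntegral_eq_of_differentiable_on_annulus_off_countable (radius_pos hR) hRR'
    Set.countable_empty]
  · exact (continuousOn_tailIntegrand hR t x n).mono fun w hw => by simpa using hw.2
  · intro w hw
    exact differentiableAt_tailIntegrand hR (by simpa using hw.1.2 : R < ‖w‖).le t x n

lemma exists_norm_tailMass_le (t : ℝ) (x : ℕ) :
    ∃ C : ℝ, ∀ n, ‖tailMass lam R t x n‖ ≤ C * (1 / 2) ^ n := by
  have hR0 := radius_pos hR
  obtain ⟨C, hC⟩ := (isCompact_sphere (0 : ℂ) (3 * R)).exists_bound_of_continuousOn <|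
    (continuousOn_tailIntegrand hR t x 0).mono fun w hw => by
      rw [Set.mem_ofPred_eq, mem_sphere_zero_iff_norm.mp hw]
      linarith
  refine ⟨3 * R * C, fun n => ?_⟩
  rw [tailMass_eq_of_radius_le hR (by linarith : R ≤ 3 * R), tailMass, ← smul_eq_mul, mul_assoc _ C]
  refine circleIntegral.norm_two_pi_i_inv_smul_integral_le_of_norm_le_const (by positivity)
    fun w hw => ?_
  have hfactor (k : ℕ) : ‖(lam k : ℂ) / ((lam k : ℂ) - w)‖ ≤ 1 / 2 := by
    refine norm_div_sub_le_half ?_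
    rw [Complex.norm_real, Real.norm_eq_abs, mem_sphere_zero_iff_norm.mp hw]
    linarith [hR k]
  calc ‖tailIntegrand lam t x n w‖
      = (∏ k ∈ range n, ‖(lam k : ℂ) / ((lam k : ℂ) - w)‖) * ‖tailIntegrand lam t x 0 w‖ := by
        simp [tailIntegrand]
    _ ≤ (∏ _k ∈ range n, 1 / 2) * C := by
        gcongr with k
        · exact hfactor k
        · exact hC w hw
    _ = C * (1 / 2) ^ n := by rw [prod_const, card_range, mul_comm]

variable (hne : ∀ k, lam k ≠ 0)
include hne

lemma tailMass_sub_tailMass_succ (t : ℝ) (x y : ℕ) :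
    tailMass lam R t x y - tailMass lam R t x (y + 1) = eL lam R t x y := by
  rw [← one_mul (eL lam R t x y)]
  refine tailMass_sub_tailMass_eq_mul_eL hR fun w hw => ?_
  have hw0 : w ≠ 0 := norm_pos_iff.mp (hw ▸ radius_pos hR)
  have hlam : (lam y : ℂ) ≠ 0 := ofReal_ne_zero.mpr (hne y)
  have hsub := ofReal_sub_ne_zero_of_abs_lt_norm (hw ▸ hR y)
  simp only [tailIntegrand, psiF, prod_range_succ]
  field_simp
  ring

lemma tailMass_succ_sub_tailMass (t : ℝ) (v y : ℕ) :
    tailMass lam R t (v + 1) (y + 1) - tailMass lam R t v (y + 1) =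
      lam y / lam v * eL lam R t v y := by
  refine tailMass_sub_tailMass_eq_mul_eL hR fun w hw => ?_
  have hw0 : w ≠ 0 := norm_pos_iff.mp (hw ▸ radius_pos hR)
  have hlamy : (lam y : ℂ) ≠ 0 := ofReal_ne_zero.mpr (hne y)
  have hlamv : (lam v : ℂ) ≠ 0 := ofReal_ne_zero.mpr (hne v)
  simp only [tailIntegrand, psiF, pF, prod_range_succ _ v]
  field_simp
  ring

lemma sum_range_eL (t : ℝ) (x n : ℕ) :
    ∑ y ∈ range n, eL lam R t x y = 1 - tailMass lam R t x n := by
  simp only [← tailMass_sub_tailMass_succ hR hne, sum_range_sub', tailMass_zero (radius_pos hR) hne]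

lemma summable_eL (t : ℝ) (x : ℕ) : Summable (eL lam R t x) := by
  obtain ⟨C, hC⟩ := exists_norm_tailMass_le hR t x
  have hs : Summable (tailMass lam R t x) :=
    .of_norm_bounded (summable_geometric_two.mul_left C) hC
  exact (hs.sub ((summable_nat_add_iff 1).mpr hs)).congr
    (tailMass_sub_tailMass_succ hR hne t x)

lemma tsum_eL (t : ℝ) (x : ℕ) : ∑' y, eL lam R t x y = 1 := by
  obtain ⟨C, hC⟩ := exists_norm_tailMass_le hR t x
  have hlim : Filter.Tendsto (tailMass lam R t x) Filter.atTop (nhds 0) :=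
    (Summable.of_norm_bounded (summable_geometric_two.mul_left C) hC).tendsto_atTop_zero
  refine tendsto_nhds_unique (summable_eL hR hne t x).hasSum.tendsto_sum_nat ?_
  simpa only [sum_range_eL hR hne, sub_zero] using hlim.const_sub 1

lemma siegmundDual_eL (t : ℝ) (v y : ℕ) :
    siegmundDual (eL lam R t) v y = lam y / lam v * eL lam R t v y := by
  rw [siegmundDual, ← Nat.range_succ_eq_Iic, sum_range_eL hR hne, sum_range_eL hR hne,
    sub_sub_sub_cancel_left, tailMass_succ_sub_tailMass hR hne]

lemma det_siegmundDual_eL {N : ℕ} (t : ℝ) (y y' : Fin N → ℕ) :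
    (Matrix.of fun i j => siegmundDual (eL lam R t) (y i) (y' j)).det =
      ((∏ j, lam (y' j) : ℝ) : ℂ) * (((∏ i, (lam (y i))⁻¹ : ℝ) : ℂ) *
        (Matrix.of fun i j => eL lam R t (y i) (y' j)).det) := by
  rw [ofReal_prod, ofReal_prod, ← Matrix.det_mul_column, ← Matrix.det_mul_row]
  congr 1
  ext i j
  simp only [Matrix.of_apply, siegmundDual_eL hR hne, ofReal_inv]
  ring

end

end Contour

theorem stmt_8_general {lam : ℕ → ℝ} {R : ℝ} (hne : ∀ k, lam k ≠ 0) (hR : ∀ k, |lam k| < R)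
    {N : ℕ} (t : ℝ) {x : Fin (N + 1) → ℕ} (hx : Monotone x) {y' : Fin N → ℕ} (hy' : Monotone y') :
    HasSum (fun z : { z : Fin (N + 1) → ℕ // StrictMono z } =>
        (Matrix.of fun i j => eL lam R t (x i) (z.1 j)).det *
          ((∏ i, (lam (y' i))⁻¹ : ℝ) : ℂ) * (if Interlace y' z.1 then 1 else 0))
      (∑' y : { y : Fin N → ℕ // Interlace y x },
        ((∏ i, (lam (y.1 i))⁻¹ : ℝ) : ℂ) *
          (Matrix.of fun i j => eL lam R t (y.1 i) (y' j)).det) ∧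
    Summable (fun z : { z : Fin (N + 1) → ℕ // StrictMono z } =>
        ‖(Matrix.of fun i j => eL lam R t (x i) (z.1 j)).det *
          ((∏ i, (lam (y' i))⁻¹ : ℝ) : ℂ) * (if Interlace y' z.1 then 1 else 0)‖) := by
  have hcancel : ((∏ j, lam (y' j) : ℝ) : ℂ) * ((∏ j, (lam (y' j))⁻¹ : ℝ) : ℂ) = 1 := by
    rw [← ofReal_mul, ← prod_mul_distrib]
    simp [hne]
  have hdual := hasSum_det_interlace (fun a => (summable_eL hR hne t a).norm)
    (tsum_eL hR hne t) hx hy'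
  simp only [det_siegmundDual_eL hR hne, tsum_mul_left] at hdual
  have hscaled := hdual.mul_right ((∏ i, (lam (y' i))⁻¹ : ℝ) : ℂ)
  rw [mul_right_comm, hcancel, one_mul] at hscaled
  have hsum := hasSum_mul_ite_interlace (f := fun z =>
    (Matrix.of fun i j => eL lam R t (x i) (z j)).det * ((∏ i, (lam (y' i))⁻¹ : ℝ) : ℂ)) hscaled
  exact ⟨hsum, hsum.summable.norm⟩

/-- the Karlin–McGregor semigroups on W^{N+1} and W^N are intertwined,
P_t^{N+1} Λ_N^{N+1} = Λ_N^{N+1} P_t^N: for all t ≥ 0, x ∈ W^{N+1}, y' ∈ W^N,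
Σ_{z ∈ W^{N+1}} det(e^{tL}(x_i,z_j)) ∏ λ(y'_i)⁻¹ 1(y'≺z)
  = Σ_{y ∈ W^N : y ≺ x} ∏ λ(y_i)⁻¹ det(e^{tL}(y_i,y'_j)),
the series on the left converging absolutely. -/
theorem stmt_8 (lam : ℕ → ℝ) (s M : ℝ) (hs : 0 < s)
    (hlb : ∀ x, s ≤ lam x) (hub : ∀ x, lam x ≤ M)
    (R : ℝ) (hR : M < R) (N : ℕ) (hN : 1 ≤ N) (t : ℝ) (ht : 0 ≤ t)
    (x : Fin (N + 1) → ℕ) (hx : StrictMono x)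
    (y' : Fin N → ℕ) (hy' : StrictMono y') :
    HasSum (fun z : { z : Fin (N + 1) → ℕ // StrictMono z } =>
        (Matrix.of fun i j => eL lam R t (x i) (z.1 j)).det *
          ((∏ i, (lam (y' i))⁻¹ : ℝ) : ℂ) * (if Interlace y' z.1 then 1 else 0))
      (∑' y : { y : Fin N → ℕ // Interlace y x },
        ((∏ i, (lam (y.1 i))⁻¹ : ℝ) : ℂ) *
          (Matrix.of fun i j => eL lam R t (y.1 i) (y' j)).det) ∧
    Summable (fun z : { z : Fin (N + 1) → ℕ // StrictMono z } =>
        ‖(Matrix.of fun i j => eL lam R t (x i) (z.1 j)).det *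
          ((∏ i, (lam (y' i))⁻¹ : ℝ) : ℂ) * (if Interlace y' z.1 then 1 else 0)‖) := by
  have hpos (k : ℕ) : 0 < lam k := hs.trans_le (hlb k)
  exact stmt_8_general (fun k => (hpos k).ne')
    (fun k => (abs_of_pos (hpos k)).trans_lt ((hub k).trans_lt hR)) t hx.monotone hy'.monotone
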